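/- Let X be a finite subset of S with |X| = q ≥ 1 and let 1 ≤ k ≤ q. Let 𝒫*(X) denote the simplicial complex of all nonempty subsets of X, and 𝒫*_{≤k}(X) the simplicial complex of all nonempty subsets of X of cardinality at most k. Then d(𝒫*(X), 𝒫*_{≤k}(X)) = 1 − k/q. Moreover, if X is an infinite subset of S (with 𝒫*(X) replaced by the complex of all nonempty finite subsets of X), then d(𝒫*_f(X), 𝒫*_{≤k}(X)) = 1. -/

import Mathlib

open scoped BigOperators

/-- A simplicial complex over the vertex set `S`: a nonempty collection of
nonempty finite subsets of `S`, closed under taking nonempty subsets. -/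
def IsSimplicialComplex {S : Type*} (K : Set (Finset S)) : Prop :=
  K.Nonempty ∧ (∀ F ∈ K, F.Nonempty) ∧
    ∀ F ∈ K, ∀ G : Finset S, G.Nonempty → G ⊆ F → G ∈ K

/-- Halved ℓ¹ distance between finitely supported real functions:
`d(α,β) = (1/2) ∑ₛ |α s - β s|`. -/
noncomputable def l1dist {S : Type*} (α β : S →₀ ℝ) : ℝ :=
  (1 / 2) * (α - β).sum fun _ x => |x|

/-- The ℓ¹ geometric realization of a collection `K` of finite subsets of `S`:
finitely supported probability vectors whose support is a face of `K`. -/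
def realization {S : Type*} (K : Set (Finset S)) : Set (S →₀ ℝ) :=
  {α | (∀ s, 0 ≤ α s) ∧ (α.sum fun _ x => x) = 1 ∧ α.support ∈ K}

/-- Distance from a point to a set of finitely supported functions. -/
noncomputable def distToSet {S : Type*} (α : S →₀ ℝ) (X : Set (S →₀ ℝ)) : ℝ :=
  sInf (l1dist α '' X)

/-- One-sided Hausdorff distance between (the realizations of) two complexes. -/
noncomputable def hdelta {S : Type*} (K₁ K₂ : Set (Finset S)) : ℝ :=
  sSup ((fun α => distToSet α (realization K₂)) '' realization K₁)

/-- Hausdorff distance between (the realizations of) two simplicial complexes. -/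
noncomputable def hdist {S : Type*} (K₁ K₂ : Set (Finset S)) : ℝ :=
  max (hdelta K₁ K₂) (hdelta K₂ K₁)

/-- `d(F, K)`: supremum of distances to `|K|₁` over probability vectors
supported exactly on `F`. -/
noncomputable def dFace {S : Type*} (F : Finset S) (K : Set (Finset S)) : ℝ :=
  sSup ((fun α => distToSet α (realization K)) ''
    {α : S →₀ ℝ | (∀ s, 0 ≤ α s) ∧ (α.sum fun _ x => x) = 1 ∧ α.support = F})

/-- The `n`-skeleton of a simplicial complex. -/
def skeleton {S : Type*} (n : ℕ) (K : Set (Finset S)) : Set (Finset S) :=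
  {F | F ∈ K ∧ F.card ≤ n + 1}

/-!
Between probability vectors, `l1dist` is the total variation distance. Moving all the mass of `α`
into a face `F` of a complex `K` therefore costs exactly the mass of `α` outside `F`, and no vector
supported in `F` is closer, so the distance from `α` to the realization of `K` is
`1 - sup {α(F) | F ∈ K}`. For the `n`-skeleton of a complex with faces of cardinality at most `q`,
the `n + 1` heaviest vertices of `α` carry mass at least `(n + 1) / q`, with equality at the
barycenter of a face of cardinality `q`.
-/

section

open Finset

variable {S : Type*}

section TotalVariation

variable {α β : S →₀ ℝ}

theorem l1dist_nonneg (α β : S →₀ ℝ) : 0 ≤ l1dist α β :=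
  mul_nonneg (by norm_num) (sum_nonneg fun _ _ => abs_nonneg _)

theorem l1dist_self (α : S →₀ ℝ) : l1dist α α = 0 := by
  simp [l1dist]

theorem l1dist_eq_sum_negPart (h : (α.sum fun _ x => x) = β.sum fun _ x => x) :
    l1dist α β = (α - β).sum fun _ x => x⁻ := by
  have hzero : ((α - β).sum fun _ x => x) = 0 := by
    rw [Finsupp.sum_sub_index fun _ _ _ => rfl, h, sub_self]
  have habs (x : ℝ) : |x| = x + 2 * x⁻ := by
    linarith [abs_sub_eq_two_nsmul_negPart x, two_nsmul x⁻]
  simp only [l1dist, habs, Finsupp.sum_add, hzero, ← Finsupp.mul_sum]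
  ring

theorem sum_sub_sum_le_l1dist (h : (α.sum fun _ x => x) = β.sum fun _ x => x) (F : Finset S) :
    ∑ s ∈ F, β s - ∑ s ∈ F, α s ≤ l1dist α β := by
  classical
  rw [l1dist_eq_sum_negPart h, ← sum_sub_distrib,
    Finsupp.sum_of_support_subset (s := (α - β).support ∪ F) _ subset_union_left _
      fun _ _ => negPart_zero]
  calc ∑ s ∈ F, (β s - α s)
      ≤ ∑ s ∈ F, ((α - β) s)⁻ := sum_le_sum fun s _ => by
        simpa using neg_le_negPart ((α - β) s)
    _ ≤ ∑ s ∈ (α - β).support ∪ F, ((α - β) s)⁻ :=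
        sum_le_sum_of_subset_of_nonneg subset_union_right fun _ _ _ => negPart_nonneg _

theorem l1dist_eq_sum_sub_sum {F : Finset S} (hα : 0 ≤ α)
    (h : (α.sum fun _ x => x) = β.sum fun _ x => x) (hβ : β.support ⊆ F)
    (hle : ∀ s ∈ F, α s ≤ β s) :
    l1dist α β = ∑ s ∈ F, β s - ∑ s ∈ F, α s := by
  classical
  have hout : ∀ s ∉ F, ((α - β) s)⁻ = 0 := fun s hs => by
    simpa [Finsupp.notMem_support_iff.1 fun h => hs (hβ h)] using hα s
  have hin : ∀ s ∈ F, ((α - β) s)⁻ = β s - α s := fun s hs => by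
    simp [negPart_of_nonpos, hle s hs]
  rw [l1dist_eq_sum_negPart h, ← sum_sub_distrib, ← sum_congr rfl hin,
    Finsupp.sum_of_support_subset (s := (α - β).support ∪ F) _ subset_union_left _
      fun _ _ => negPart_zero]
  exact (sum_subset subset_union_right fun s _ => hout s).symm

end TotalVariation

theorem exists_sum_eq_support_subset_le {M : Type*} [AddCommMonoid M] [PartialOrder M]
    [IsOrderedAddMonoid M] {α : S →₀ M} (hα : 0 ≤ α) {F : Finset S} (hF : F.Nonempty) :
    ∃ β : S →₀ M, (α.sum fun _ x => x) = (β.sum fun _ x => x) ∧ 0 ≤ β ∧ β.support ⊆ F ∧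
      ∀ s ∈ F, α s ≤ β s := by
  classical
  obtain ⟨f, hf⟩ := hF
  let retract : S → S := fun s => if s ∈ F then s else f
  have hmaps (s : S) : retract s ∈ F := by
    by_cases hs : s ∈ F <;> simp [retract, hs, hf]
  refine ⟨α.mapDomain retract, ?_, Finsupp.mapDomain_nonneg hα, ?_, fun s hs => ?_⟩
  · rw [Finsupp.sum_mapDomain_index (fun _ => rfl) fun _ _ _ => rfl]
  · exact Finsupp.mapDomain_support.trans (image_subset_iff.2 fun s _ => hmaps s)
  · have hsingle : Finsupp.single s (α s) ≤ α := fun t => by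
      by_cases hst : s = t
      · simp [hst]
      · simpa [Finsupp.single_eq_of_ne' hst] using hα t
    have hfix : retract s = s := if_pos hs
    simpa [Finsupp.mapDomain_single, hfix] using Finsupp.mapDomain_mono (f := retract) hsingle s

theorem exists_subset_card_eq_expect_le {K : Type*} [Field K] [LinearOrder K]
    [IsStrictOrderedRing K] (f : S → K) {k : ℕ} (hk : k ≠ 0) (X : Finset S) (hX : k ≤ #X) :
    ∃ F ⊆ X, #F = k ∧ 𝔼 s ∈ X, f s ≤ 𝔼 s ∈ F, f s := by
  classical
  induction X using Finset.strongInduction with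
  | H X ih =>
    obtain hXk | hXk := hX.eq_or_lt
    · exact ⟨X, subset_rfl, hXk.symm, le_rfl⟩
    obtain ⟨m, hm, hmin⟩ := X.exists_min_image f (card_pos.1 (by lia))
    have hcard := card_erase_add_one hm
    have herase : (X.erase m).Nonempty := card_pos.1 (by lia)
    have hstep : 𝔼 s ∈ X, f s ≤ 𝔼 s ∈ X.erase m, f s := by
      have hle : f m ≤ 𝔼 s ∈ X.erase m, f s :=
        le_expect herase fun s hs => hmin s (mem_of_mem_erase hs)
      rw [expect_eq_sum_div_card, div_le_iff₀ (by exact_mod_cast card_pos.2 ⟨m, hm⟩),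
        ← sum_erase_add X f hm, ← card_mul_expect, ← hcard]
      push_cast
      linarith
    obtain ⟨F, hF, hFk, hle⟩ := ih _ (erase_ssubset hm) (by lia)
    exact ⟨F, hF.trans (erase_subset m X), hFk, hstep.trans hle⟩

section Barycenter

variable {F : Finset S}

/-- The barycenter of the simplex with vertex set `F`: the uniform probability vector on `F`
(the zero vector if `F` is empty). -/
noncomputable def barycenter (F : Finset S) : S →₀ ℝ :=
  Finsupp.indicator F fun _ _ => (#F : ℝ)⁻¹

theorem barycenter_apply_of_mem {s : S} (hs : s ∈ F) : barycenter F s = (#F : ℝ)⁻¹ :=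
  Finsupp.indicator_of_mem hs _

theorem barycenter_apply_of_notMem {s : S} (hs : s ∉ F) : barycenter F s = 0 :=
  Finsupp.indicator_of_notMem hs _

theorem barycenter_nonneg (s : S) : 0 ≤ barycenter F s := by
  by_cases hs : s ∈ F <;>
    simp [barycenter_apply_of_mem, barycenter_apply_of_notMem, hs]

theorem barycenter_apply_le (s : S) : barycenter F s ≤ (#F : ℝ)⁻¹ := by
  by_cases hs : s ∈ F <;>
    simp [barycenter_apply_of_mem, barycenter_apply_of_notMem, hs]

theorem support_barycenter (F : Finset S) : (barycenter F).support = F := by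
  refine Subset.antisymm (Finsupp.support_indicator_subset F _) fun s hs => ?_
  rw [Finsupp.mem_support_iff, barycenter_apply_of_mem hs]
  exact inv_ne_zero (by exact_mod_cast card_ne_zero_of_mem hs)

theorem sum_barycenter_le (G : Finset S) : ∑ s ∈ G, barycenter F s ≤ #G / #F := by
  simpa [div_eq_mul_inv] using sum_le_card_nsmul G _ _ fun s _ => barycenter_apply_le (F := F) s

theorem barycenter_mem_realization {K : Set (Finset S)} (hFK : F ∈ K) (hF : F.Nonempty) :
    barycenter F ∈ realization K := by
  refine ⟨barycenter_nonneg, ?_, by rwa [support_barycenter]⟩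
  have hcard : (#F : ℝ) ≠ 0 := by exact_mod_cast hF.card_ne_zero
  rw [Finsupp.sum, support_barycenter, sum_congr rfl fun s => barycenter_apply_of_mem]
  simp [hcard]

end Barycenter

section Distance

variable {α : S →₀ ℝ} {K L : Set (Finset S)}

theorem distToSet_nonneg (α : S →₀ ℝ) (Y : Set (S →₀ ℝ)) : 0 ≤ distToSet α Y :=
  Real.sInf_nonneg <| Set.forall_mem_image.2 fun _ _ => l1dist_nonneg _ _

theorem distToSet_le_l1dist {β : S →₀ ℝ} {Y : Set (S →₀ ℝ)} (hβ : β ∈ Y) :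
    distToSet α Y ≤ l1dist α β :=
  csInf_le ⟨0, Set.forall_mem_image.2 fun _ _ => l1dist_nonneg _ _⟩ (Set.mem_image_of_mem _ hβ)

theorem realization_mono (h : K ⊆ L) : realization K ⊆ realization L :=
  fun _ hα => ⟨hα.1, hα.2.1, h hα.2.2⟩

theorem support_nonempty_of_mem_realization (hα : α ∈ realization K) : α.support.Nonempty := by
  rw [Finsupp.support_nonempty_iff]
  rintro rfl
  simpa using hα.2.1

theorem hdelta_nonneg (L K : Set (Finset S)) : 0 ≤ hdelta L K :=
  Real.sSup_nonneg <| Set.forall_mem_image.2 fun _ _ => distToSet_nonneg _ _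

theorem hdelta_le {c : ℝ} (hc : 0 ≤ c)
    (h : ∀ α ∈ realization L, distToSet α (realization K) ≤ c) : hdelta L K ≤ c :=
  Real.sSup_le (Set.forall_mem_image.2 h) hc

theorem hdist_eq_hdelta_of_subset (h : K ⊆ L) : hdist L K = hdelta L K := by
  refine max_eq_left ((hdelta_le le_rfl fun α hα => ?_).trans (hdelta_nonneg L K))
  simpa only [l1dist_self] using distToSet_le_l1dist (α := α) (realization_mono h hα)

end Distance

theorem skeleton_subset (n : ℕ) (K : Set (Finset S)) : skeleton n K ⊆ K :=
  fun _ hF => hF.1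

namespace IsSimplicialComplex

variable {α : S →₀ ℝ} {K L : Set (Finset S)} {F : Finset S} {n k q : ℕ}

protected theorem skeleton (hK : IsSimplicialComplex K) (n : ℕ) :
    IsSimplicialComplex (skeleton n K) := by
  obtain ⟨⟨F, hF⟩, hne, hdown⟩ := hK
  obtain ⟨v, hv⟩ := hne F hF
  refine ⟨⟨{v}, ?_, by simp⟩, fun G hG => hne G hG.1, fun G hG H hH hHG => ?_⟩
  · exact hdown F hF {v} (singleton_nonempty v) (singleton_subset_iff.2 hv)
  · exact ⟨hdown G hG.1 H hH hHG, (card_le_card hHG).trans hG.2⟩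

theorem realization_nonempty (hK : IsSimplicialComplex K) : (realization K).Nonempty :=
  let ⟨⟨F, hF⟩, hne, _⟩ := hK
  ⟨barycenter F, barycenter_mem_realization hF (hne F hF)⟩

theorem distToSet_le_one_sub_sum (hK : IsSimplicialComplex K) (hα : α ∈ realization L)
    (hF : F ∈ K) : distToSet α (realization K) ≤ 1 - ∑ s ∈ F, α s := by
  obtain ⟨β, hsum, hβ, hβF, hle⟩ :=
    exists_sum_eq_support_subset_le (show 0 ≤ α from hα.1) (hK.2.1 F hF)
  have hβ1 : (β.sum fun _ x => x) = 1 := hsum ▸ hα.2.1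
  have hβne : β.support.Nonempty :=
    support_nonempty_of_mem_realization (K := Set.univ) ⟨hβ, hβ1, trivial⟩
  calc distToSet α (realization K)
      ≤ l1dist α β := distToSet_le_l1dist ⟨hβ, hβ1, hK.2.2 F hF _ hβne hβF⟩
    _ = ∑ s ∈ F, β s - ∑ s ∈ F, α s := l1dist_eq_sum_sub_sum hα.1 hsum hβF hle
    _ = 1 - ∑ s ∈ F, α s := by
      rw [← hβ1, Finsupp.sum_of_support_subset β hβF _ fun _ _ => rfl]

theorem one_sub_le_distToSet (hK : IsSimplicialComplex K) (hα : (α.sum fun _ x => x) = 1)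
    {m : ℝ} (hm : ∀ F ∈ K, ∑ s ∈ F, α s ≤ m) : 1 - m ≤ distToSet α (realization K) := by
  refine le_csInf (hK.realization_nonempty.image _) (Set.forall_mem_image.2 fun β hβ => ?_)
  calc 1 - m ≤ ∑ s ∈ β.support, β s - ∑ s ∈ β.support, α s :=
        sub_le_sub hβ.2.1.ge (hm _ hβ.2.2)
    _ ≤ l1dist α β := sum_sub_sum_le_l1dist (hα.trans hβ.2.1.symm) _

theorem distToSet_le_one (hK : IsSimplicialComplex K) (hα : α ∈ realization L) :
    distToSet α (realization K) ≤ 1 :=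
  let ⟨_, hF⟩ := hK.1
  (hK.distToSet_le_one_sub_sum hα hF).trans (sub_le_self 1 (sum_nonneg fun s _ => hα.1 s))

theorem distToSet_le_hdelta (hK : IsSimplicialComplex K) (hα : α ∈ realization L) :
    distToSet α (realization K) ≤ hdelta L K :=
  le_csSup ⟨1, Set.forall_mem_image.2 fun _ => hK.distToSet_le_one⟩ (Set.mem_image_of_mem _ hα)

theorem one_sub_div_card_le_hdelta (hK : IsSimplicialComplex K) (hk : ∀ G ∈ K, #G ≤ k)
    (hFL : F ∈ L) (hF : F.Nonempty) : 1 - (k : ℝ) / #F ≤ hdelta L K := by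
  have hmem := barycenter_mem_realization hFL hF
  refine (hK.one_sub_le_distToSet hmem.2.1 fun G hG => ?_).trans (hK.distToSet_le_hdelta hmem)
  calc ∑ s ∈ G, barycenter F s ≤ #G / #F := sum_barycenter_le G
    _ ≤ k / #F := by gcongr; exact hk G hG

theorem hdelta_eq_one_of_not_bddAbove (hK : IsSimplicialComplex K) (hk : ∀ G ∈ K, #G ≤ k)
    (hL : ¬BddAbove (card '' L)) : hdelta L K = 1 := by
  refine le_antisymm (hdelta_le zero_le_one fun α => hK.distToSet_le_one)
    (le_of_forall_pos_sub_le fun ε hε => ?_)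
  obtain ⟨N, hN⟩ := exists_nat_gt ((k : ℝ) / ε)
  obtain ⟨_, ⟨F, hFL, rfl⟩, hNF⟩ := not_bddAbove_iff.1 hL N
  have hF : F.Nonempty := card_pos.1 (by lia)
  have hsmall : (k : ℝ) / #F ≤ ε :=
    div_le_comm₀ hε (by exact_mod_cast hF.card_pos) |>.1 (hN.le.trans (by exact_mod_cast hNF.le))
  linarith [hK.one_sub_div_card_le_hdelta hk hFL hF]

theorem exists_mem_skeleton_div_le_sum (hL : IsSimplicialComplex L) (hα : α ∈ realization L)
    (hq : #α.support ≤ q) (hnq : n + 1 ≤ q) :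
    ∃ F ∈ skeleton n L, ((n + 1 : ℕ) : ℝ) / q ≤ ∑ s ∈ F, α s := by
  have hsum : ∑ s ∈ α.support, α s = 1 := hα.2.1
  obtain hsmall | hlarge := le_total #α.support (n + 1)
  · refine ⟨α.support, ⟨hα.2.2, hsmall⟩, ?_⟩
    rw [hsum]
    exact div_le_one_of_le₀ (by exact_mod_cast hnq) q.cast_nonneg
  obtain ⟨F, hF, hFcard, hmean⟩ :=
    exists_subset_card_eq_expect_le α n.succ_ne_zero α.support hlarge
  have hFne : F.Nonempty := card_pos.1 (by lia)
  refine ⟨F, ⟨hL.2.2 _ hα.2.2 F hFne hF, hFcard.le⟩, ?_⟩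
  have hpos : (0 : ℝ) < #α.support := by
    exact_mod_cast (support_nonempty_of_mem_realization hα).card_pos
  calc ((n + 1 : ℕ) : ℝ) / q
      ≤ #F * (𝔼 s ∈ α.support, α s) := by
        rw [hFcard, expect_eq_sum_div_card, hsum, mul_one_div]
        gcongr
    _ ≤ #F * (𝔼 s ∈ F, α s) := by gcongr
    _ = ∑ s ∈ F, α s := card_mul_expect F α

theorem hdelta_skeleton_le (hL : IsSimplicialComplex L) (hq : ∀ F ∈ L, #F ≤ q)
    (hnq : n + 1 ≤ q) : hdelta L (skeleton n L) ≤ 1 - ((n + 1 : ℕ) : ℝ) / q := by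
  refine hdelta_le (sub_nonneg.2 ?_) fun α hα => ?_
  · exact div_le_one_of_le₀ (by exact_mod_cast hnq) q.cast_nonneg
  obtain ⟨F, hF, hmass⟩ := hL.exists_mem_skeleton_div_le_sum hα (hq _ hα.2.2) hnq
  exact ((hL.skeleton n).distToSet_le_one_sub_sum hα hF).trans (sub_le_sub_left hmass 1)

end IsSimplicialComplex

section FullComplex

/-- The full simplicial complex `𝒫*_f(X)` on the vertex set `X`, whose faces are all the nonempty
finite subsets of `X`. -/
def fullComplex (X : Set S) : Set (Finset S) :=
  {F | F.Nonempty ∧ (F : Set S) ⊆ X}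

theorem isSimplicialComplex_fullComplex {X : Set S} (hX : X.Nonempty) :
    IsSimplicialComplex (fullComplex X) := by
  obtain ⟨x, hx⟩ := hX
  exact ⟨⟨{x}, singleton_nonempty x, by simpa using hx⟩, fun F hF => hF.1,
    fun F hF G hG hGF => ⟨hG, (coe_subset.2 hGF).trans hF.2⟩⟩

theorem isGreatest_card_fullComplex {X : Finset S} (hX : X.Nonempty) :
    IsGreatest (card '' fullComplex (X : Set S)) #X :=
  ⟨⟨X, ⟨hX, subset_rfl⟩, rfl⟩,
    Set.forall_mem_image.2 fun _ hF => card_le_card (coe_subset.1 hF.2)⟩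

theorem not_bddAbove_card_fullComplex {X : Set S} (hX : X.Infinite) :
    ¬BddAbove (card '' fullComplex X) := by
  refine not_bddAbove_iff.2 fun n => ?_
  obtain ⟨F, hFX, hF⟩ := hX.exists_subset_card_eq (n + 1)
  exact ⟨#F, ⟨F, ⟨card_pos.1 (by lia), hFX⟩, rfl⟩, by lia⟩

end FullComplex

theorem stmt11_general {L : Set (Finset S)} (hL : IsSimplicialComplex L) (n : ℕ) :
    (∀ q, n + 1 ≤ q → IsGreatest (card '' L) q →
      hdist L (skeleton n L) = 1 - ((n + 1 : ℕ) : ℝ) / q) ∧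
    (¬BddAbove (card '' L) → hdist L (skeleton n L) = 1) := by
  have hcard : ∀ G ∈ skeleton n L, #G ≤ n + 1 := fun _ hG => hG.2
  rw [hdist_eq_hdelta_of_subset (skeleton_subset n L)]
  refine ⟨?_, (hL.skeleton n).hdelta_eq_one_of_not_bddAbove hcard⟩
  rintro _ hnq ⟨⟨F, hF, rfl⟩, hmax⟩
  exact le_antisymm (hL.hdelta_skeleton_le (Set.forall_mem_image.1 hmax) hnq)
    ((hL.skeleton n).one_sub_div_card_le_hdelta hcard hF (hL.2.1 F hF))

end

/-- Distance between the full simplex on a vertex set `X` and its `k`-th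
"uniform" subcomplex `𝒫*_{≤k}(X)`: it equals `1 - k/q` when `|X| = q` is finite,
and `1` when `X` is infinite. -/
theorem stmt11 {S : Type*} :
    (∀ (X : Finset S) (q k : ℕ), X.card = q → 1 ≤ q → 1 ≤ k → k ≤ q →
      hdist {F : Finset S | F.Nonempty ∧ F ⊆ X}
        {F : Finset S | F.Nonempty ∧ F ⊆ X ∧ F.card ≤ k} = 1 - (k : ℝ) / q) ∧
    (∀ X : Set S, X.Infinite → ∀ k : ℕ, 1 ≤ k →
      hdist {F : Finset S | F.Nonempty ∧ (F : Set S) ⊆ X}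
        {F : Finset S | F.Nonempty ∧ (F : Set S) ⊆ X ∧ F.card ≤ k} = 1) := by
  refine ⟨?_, fun X hX k hk => ?_⟩
  · rintro X _ k rfl hq hk hkq
    obtain ⟨n, rfl⟩ := Nat.exists_eq_add_of_le' hk
    have hX : X.Nonempty := Finset.card_pos.1 hq
    simpa only [skeleton, fullComplex, Set.mem_ofPred_eq, and_assoc, Finset.coe_subset] using
      (stmt11_general (isSimplicialComplex_fullComplex hX) n).1 _ hkq
        (isGreatest_card_fullComplex hX)
  · obtain ⟨n, rfl⟩ := Nat.exists_eq_add_of_le' hk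
    simpa only [skeleton, fullComplex, Set.mem_ofPred_eq, and_assoc] using
      (stmt11_general (isSimplicialComplex_fullComplex hX.nonempty) n).2
        (not_bddAbove_card_fullComplex hX)
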